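/- arXiv:2504.21284 — 8 statements merged into one kernel-verified Lean document; each statement's English description precedes it below -/
import Mathlib

section
/- Let R_t, R_r, θ be real numbers with 0 < R_t, 0 < R_r, 0 ≤ θ/2 ≤ π/2, and R_r · sin(θ/2) ≤ R_t. Define d := R_r·cos(θ/2) − √(R_t² − R_r²·sin²(θ/2)). Then (R_t² + R_r² − d²)/(2·R_t·R_r) = (R_r/R_t)·sin²(θ/2) + cos(θ/2)·√(1 − (R_r/R_t)²·sin²(θ/2)). -/
/-!
Write `T` for the root `√(1 - (Rr / Rt)² sin²(θ/2))`. Pulling `Rt²` out of the root in the slant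
distance gives `d = Rr cos(θ/2) - Rt T`. Since `Rr sin(θ/2) ≤ Rt`, the radicand is nonnegative and
`Rt² T² = Rt² - Rr² sin²(θ/2)`; together with `sin² + cos² = 1` this yields
`Rt² + Rr² - d² = 2 Rr² sin²(θ/2) + 2 Rt Rr cos(θ/2) T`, and dividing by `2 Rt Rr` concludes.
-/

open Real

/-- Paper's Proposition 1, uplink Case 2: with the slant distance
`d = R_r cos(θ/2) − √(R_t² − R_r² sin²(θ/2))`, the cosine of the vertex angle
`(R_t² + R_r² − d²)/(2 R_t R_r)` equals the paper's quantity `δ_{i,u}`. -/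
theorem uplink_vertex_cos (Rt Rr θ : ℝ) (hRt : 0 < Rt) (hRr : 0 < Rr)
    (hθ0 : 0 ≤ θ / 2) (hθ1 : θ / 2 ≤ π / 2) (hbeam : Rr * Real.sin (θ / 2) ≤ Rt) :
    (Rt ^ 2 + Rr ^ 2 -
        (Rr * Real.cos (θ / 2) -
          Real.sqrt (Rt ^ 2 - Rr ^ 2 * Real.sin (θ / 2) ^ 2)) ^ 2) / (2 * Rt * Rr) =
      (Rr / Rt) * Real.sin (θ / 2) ^ 2 +
        Real.cos (θ / 2) * Real.sqrt (1 - (Rr / Rt) ^ 2 * Real.sin (θ / 2) ^ 2) := by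
  have hs : 0 ≤ Real.sin (θ / 2) :=
    Real.sin_nonneg_of_nonneg_of_le_pi hθ0 (by linarith [Real.pi_pos])
  -- The beam edge meets the transmitter sphere, so neither square root is truncated.
  have hle : 0 ≤ 1 - (Rr / Rt) ^ 2 * Real.sin (θ / 2) ^ 2 := by
    have h : Rr / Rt * Real.sin (θ / 2) ≤ 1 := by
      rw [div_mul_eq_mul_div, div_le_one hRt]
      exact hbeam
    have h0 : 0 ≤ Rr / Rt * Real.sin (θ / 2) := by positivity
    nlinarith
  have hroot : Real.sqrt (Rt ^ 2 - Rr ^ 2 * Real.sin (θ / 2) ^ 2) =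
      Rt * Real.sqrt (1 - (Rr / Rt) ^ 2 * Real.sin (θ / 2) ^ 2) := by
    rw [show Rt ^ 2 - Rr ^ 2 * Real.sin (θ / 2) ^ 2 =
        Rt ^ 2 * (1 - (Rr / Rt) ^ 2 * Real.sin (θ / 2) ^ 2) by field_simp,
      Real.sqrt_mul (sq_nonneg Rt), Real.sqrt_sq hRt.le]
  have hT := Real.sq_sqrt hle
  rw [hroot]
  set T := Real.sqrt (1 - (Rr / Rt) ^ 2 * Real.sin (θ / 2) ^ 2)
  have hT' : Rt ^ 2 * T ^ 2 = Rt ^ 2 - Rr ^ 2 * Real.sin (θ / 2) ^ 2 := by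
    rw [hT]
    field_simp
  have hcs := Real.sin_sq_add_cos_sq (θ / 2)
  rw [div_eq_iff (by positivity),
    show (Rr / Rt * Real.sin (θ / 2) ^ 2 + Real.cos (θ / 2) * T) * (2 * Rt * Rr) =
      2 * Rr ^ 2 * Real.sin (θ / 2) ^ 2 + 2 * Rt * Rr * Real.cos (θ / 2) * T by
        field_simp]
  -- Expanding the square leaves only `(Rt * T) ^ 2` and `sin ^ 2 + cos ^ 2` to evaluate.
  linear_combination -hT' - Rr ^ 2 * hcs
end

section
/- Let R_t, R_r, θ be real numbers with 0 < R_t ≤ R_r, 0 ≤ θ/2 ≤ π/2, and R_r·sin(θ/2) ≤ R_t. Then 0 ≤ (R_r/R_t)·sin²(θ/2) + cos(θ/2)·√(1 − (R_r/R_t)²·sin²(θ/2)) ≤ 1. -/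
open Real

/-! With `a = (Rr / Rt) * sin (θ / 2) ∈ [0, 1]` and `b = √(1 - a ^ 2)`, the quantity is the
inner product of the unit vectors `(sin (θ / 2), cos (θ / 2))` and `(a, b)`, so it is at most `1`;
both vectors lie in the closed first quadrant, so it is nonnegative. -/

/-- The paper's uplink quantity `δ_{i,u}` lies in `[0, 1]`, so `arccos δ_{i,u}`
is well defined and the vertex angle is acute. -/
theorem uplink_delta_mem_unit (Rt Rr θ : ℝ) (hRt : 0 < Rt) (hle : Rt ≤ Rr)
    (hθ0 : 0 ≤ θ / 2) (hθ1 : θ / 2 ≤ π / 2) (hbeam : Rr * Real.sin (θ / 2) ≤ Rt) :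
    0 ≤ (Rr / Rt) * Real.sin (θ / 2) ^ 2 +
        Real.cos (θ / 2) * Real.sqrt (1 - (Rr / Rt) ^ 2 * Real.sin (θ / 2) ^ 2) ∧
      (Rr / Rt) * Real.sin (θ / 2) ^ 2 +
        Real.cos (θ / 2) * Real.sqrt (1 - (Rr / Rt) ^ 2 * Real.sin (θ / 2) ^ 2) ≤ 1 := by
  have hs : 0 ≤ Real.sin (θ / 2) := Real.sin_nonneg_of_nonneg_of_le_pi hθ0 (by linarith [Real.pi_pos])
  have hc : 0 ≤ Real.cos (θ / 2) := Real.cos_nonneg_of_neg_pi_div_two_le_of_le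
    (by linarith [Real.pi_pos]) hθ1
  have hk : 0 ≤ Rr / Rt := div_nonneg (hRt.le.trans hle) hRt.le
  have ha : Rr / Rt * Real.sin (θ / 2) ≤ 1 := by
    rw [div_mul_eq_mul_div, div_le_one hRt]
    exact hbeam
  have ha0 : 0 ≤ Rr / Rt * Real.sin (θ / 2) := mul_nonneg hk hs
  -- The beam condition makes the radicand nonnegative, so the square root is a genuine one.
  have hb : Real.sqrt (1 - (Rr / Rt) ^ 2 * Real.sin (θ / 2) ^ 2) ^ 2
      = 1 - (Rr / Rt) ^ 2 * Real.sin (θ / 2) ^ 2 := by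
    apply Real.sq_sqrt
    nlinarith
  refine ⟨by positivity, ?_⟩
  -- Expand `0 ≤ (sin - a) ^ 2 + (cos - b) ^ 2`.
  nlinarith [Real.sin_sq_add_cos_sq (θ / 2),
    sq_nonneg (Real.sin (θ / 2) - Rr / Rt * Real.sin (θ / 2)),
    sq_nonneg (Real.cos (θ / 2) - Real.sqrt (1 - (Rr / Rt) ^ 2 * Real.sin (θ / 2) ^ 2))]
end

section
/- Work in a real inner product space. Let o, r, t be points, let R_t := ‖t − o‖ and R_r := ‖r − o‖ with 0 < R_t ≤ R_r, t ≠ r, and let θ be a real number with 0 ≤ θ/2 ≤ π/2. Suppose ⟪o − r, t − r⟫ = ‖o − r‖·‖t − r‖·cos(θ/2) and ‖t − r‖² ≤ R_r² − R_t². Then ⟪t − o, r − o⟫ / (‖t − o‖·‖r − o‖) = (R_r/R_t)·sin²(θ/2) + cos(θ/2)·√(1 − (R_r/R_t)²·sin²(θ/2)). -/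
open Real
open scoped RealInnerProductSpace

/-!
In the triangle `o r t` write `a = ‖t - o‖`, `b = ‖r - o‖`, `d = ‖t - r‖`, `c = cos (θ / 2)`,
`s = sin (θ / 2)`. The law of cosines at `r` gives `a² = b² + d² - 2bdc`, that is,
`(bc - d)² = a² - b²s²`. The near-intersection hypothesis forces `bc - d ≥ 0`, so the square root
in the claim equals `(bc - d) / a`. Since `⟪t - o, r - o⟫ = b² - bdc`, both sides are
`(b - dc) / a`.
-/

/-- Geometric content of the paper's Proposition 1, Case 2 (uplink): the cosine of
the vertex angle `∠(t, o, r)` at the Earth's center equals `δ_{i,u}`. -/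
theorem uplink_vertex_angle_cos {V : Type*} [NormedAddCommGroup V] [InnerProductSpace ℝ V]
    (o r t : V) (hRt : 0 < ‖t - o‖) (hle : ‖t - o‖ ≤ ‖r - o‖) (htr : t ≠ r)
    (θ : ℝ) (hθ0 : 0 ≤ θ / 2) (hθ1 : θ / 2 ≤ π / 2)
    (hang : ⟪o - r, t - r⟫ = ‖o - r‖ * ‖t - r‖ * Real.cos (θ / 2))
    (hnear : ‖t - r‖ ^ 2 ≤ ‖r - o‖ ^ 2 - ‖t - o‖ ^ 2) :
    ⟪t - o, r - o⟫ / (‖t - o‖ * ‖r - o‖) =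
      (‖r - o‖ / ‖t - o‖) * Real.sin (θ / 2) ^ 2 +
        Real.cos (θ / 2) *
          Real.sqrt (1 - (‖r - o‖ / ‖t - o‖) ^ 2 * Real.sin (θ / 2) ^ 2) := by
  have hro : ‖o - r‖ = ‖r - o‖ := norm_sub_rev o r
  have hd : 0 < ‖t - r‖ := norm_pos_iff.mpr (sub_ne_zero.mpr htr)
  have hb : 0 < ‖r - o‖ := hRt.trans_le hle
  have hcs := Real.sin_sq_add_cos_sq (θ / 2)
  have hlaw : ‖t - o‖ ^ 2 =
      ‖r - o‖ ^ 2 + ‖t - r‖ ^ 2 - 2 * (‖r - o‖ * ‖t - r‖ * Real.cos (θ / 2)) := by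
    have h := norm_sub_sq_real (o - r) (t - r)
    rw [sub_sub_sub_cancel_right, norm_sub_rev o t, hang, hro] at h
    linarith
  have hinner : ⟪t - o, r - o⟫ =
      ‖r - o‖ ^ 2 - ‖r - o‖ * ‖t - r‖ * Real.cos (θ / 2) := by
    have h : ⟪t - o, r - o⟫ = ⟪r - o, r - o⟫ - ⟪o - r, t - r⟫ := by
      rw [← neg_sub r o, inner_neg_left, sub_neg_eq_add, ← inner_add_right,
        real_inner_comm]
      congr 1
      abel
    rw [h, hang, hro, real_inner_self_eq_norm_sq]
  generalize ‖t - o‖ = a at *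
  generalize ‖r - o‖ = b at *
  generalize ‖t - r‖ = d at *
  generalize Real.cos (θ / 2) = c at *
  generalize Real.sin (θ / 2) = s at *
  -- `b * c - d` is the signed distance from `t` to the foot of the perpendicular from `o`
  -- onto the beam; the near-intersection hypothesis says exactly that it is nonnegative.
  have hnn : 0 ≤ b * c - d := by
    have h : 0 ≤ d * (b * c - d) := by nlinarith
    exact nonneg_of_mul_nonneg_right h hd
  have hsqrt : Real.sqrt (1 - (b / a) ^ 2 * s ^ 2) = (b * c - d) / a := by
    rw [show 1 - (b / a) ^ 2 * s ^ 2 = ((b * c - d) / a) ^ 2 by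
      field_simp
      linear_combination hlaw - b ^ 2 * hcs]
    exact Real.sqrt_sq (div_nonneg hnn hRt.le)
  rw [hsqrt, hinner]
  field_simp
  linear_combination -b * hcs
end

section
/- Work in a real inner product space. Let o, r, t be points, let R_t := ‖t − o‖ and R_r := ‖r − o‖ with 0 < R_r ≤ R_t, t ≠ r, and let α be a real number with 0 ≤ α ≤ π/2. Suppose ⟪t − r, r − o⟫ = ‖t − r‖·‖r − o‖·sin α. Then ⟪t − o, r − o⟫ / (‖t − o‖·‖r − o‖) = (R_r/R_t)·cos²α + sin α·√(1 − (R_r/R_t)²·cos²α). -/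
/-!
Write `d = ‖t - r‖`, `a = ‖r - o‖`, `T = ‖t - o‖`. Expanding `t - o = (t - r) + (r - o)` gives
`⟪t - o, r - o⟫ = d a sin α + a²` and the law of cosines `T² = d² + 2 d a sin α + a²`.
The latter reads `T² - a² cos² α = (d + a sin α)²`, so the square root in the claim equals
`(d + a sin α) / T`, and both sides of the claim equal `(d sin α + a) / T`.
-/

open Real
open scoped RealInnerProductSpace

/-- Geometric content of the paper's Proposition 1 (downlink): the cosine of the
vertex angle `∠(t, o, r)` at the Earth's center equals `δ_{i,d}`. -/
theorem downlink_vertex_angle_cos {V : Type*} [NormedAddCommGroup V] [InnerProductSpace ℝ V]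
    (o r t : V) (hRr : 0 < ‖r - o‖) (hle : ‖r - o‖ ≤ ‖t - o‖) (htr : t ≠ r)
    (α : ℝ) (hα0 : 0 ≤ α) (hα1 : α ≤ π / 2)
    (hang : ⟪t - r, r - o⟫ = ‖t - r‖ * ‖r - o‖ * Real.sin α) :
    ⟪t - o, r - o⟫ / (‖t - o‖ * ‖r - o‖) =
      (‖r - o‖ / ‖t - o‖) * Real.cos α ^ 2 +
        Real.sin α *
          Real.sqrt (1 - (‖r - o‖ / ‖t - o‖) ^ 2 * Real.cos α ^ 2) := by
  have hT : 0 < ‖t - o‖ := hRr.trans_le hle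
  have hsum : t - o = (t - r) + (r - o) := by abel
  have hs : 0 ≤ Real.sin α := Real.sin_nonneg_of_nonneg_of_le_pi hα0 (by linarith [Real.pi_pos])
  have hinner : ⟪t - o, r - o⟫ = ‖t - r‖ * ‖r - o‖ * Real.sin α + ‖r - o‖ ^ 2 := by
    rw [hsum, inner_add_left, hang, real_inner_self_eq_norm_sq]
  have hsq : ‖t - o‖ ^ 2 =
      ‖t - r‖ ^ 2 + 2 * (‖t - r‖ * ‖r - o‖ * Real.sin α) + ‖r - o‖ ^ 2 := by
    rw [hsum, norm_add_sq_real, hang]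
  have hcos : Real.cos α ^ 2 = 1 - Real.sin α ^ 2 := Real.cos_sq' α
  -- Law of cosines: `‖t - o‖² - ‖r - o‖² cos² α` is the square of `‖t - r‖ + ‖r - o‖ sin α`,
  -- which is nonnegative because `sin α ≥ 0`.
  have hsqrt : Real.sqrt (1 - (‖r - o‖ / ‖t - o‖) ^ 2 * Real.cos α ^ 2) =
      (‖t - r‖ + ‖r - o‖ * Real.sin α) / ‖t - o‖ := by
    have hsquare : 1 - (‖r - o‖ / ‖t - o‖) ^ 2 * Real.cos α ^ 2 =
        ((‖t - r‖ + ‖r - o‖ * Real.sin α) / ‖t - o‖) ^ 2 := by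
      rw [hcos]
      field_simp
      rw [hsq]
      ring
    rw [hsquare, Real.sqrt_sq (by positivity)]
  rw [hinner, hsqrt, hcos]
  field_simp
  ring
end

section
/- Let R_t, R_r, θ be real numbers with 0 < R_t < R_r and 0 < θ/2 ≤ π/2, and suppose R_r·sin(θ/2) > R_t. Work in a real inner product space and let o, r be points with ‖r − o‖ = R_r. Then there is no point t with t ≠ r, ‖t − o‖ = R_t, and ⟪o − r, t − r⟫ = ‖o − r‖·‖t − r‖·cos(θ/2). -/
open Real
open scoped RealInnerProductSpace

/-- Justification of the case split in the paper's Proposition 1 (uplink): when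
`R_r sin(θ/2) > R_t`, a ray from the receiver `r` making angle `θ/2` with the ray
toward the Earth's center `o` misses the transmitter sphere of radius `R_t`. -/
theorem beam_misses_sphere {V : Type*} [NormedAddCommGroup V] [InnerProductSpace ℝ V]
    (Rt Rr θ : ℝ) (hRt : 0 < Rt) (hlt : Rt < Rr) (hθ0 : 0 < θ / 2) (hθ1 : θ / 2 ≤ π / 2)
    (hbeam : Rr * Real.sin (θ / 2) > Rt)
    (o r : V) (hRr : ‖r - o‖ = Rr) :
    ¬ ∃ t : V, t ≠ r ∧ ‖t - o‖ = Rt ∧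
      ⟪o - r, t - r⟫ = ‖o - r‖ * ‖t - r‖ * Real.cos (θ / 2) := by
  rintro ⟨t, -, hto, hang⟩
  have hor : ‖o - r‖ = Rr := by rw [norm_sub_rev, hRr]
  have hcos : Rt ^ 2 = ‖t - r‖ ^ 2 - 2 * (Rr * ‖t - r‖ * Real.cos (θ / 2)) + Rr ^ 2 := by
    have h := norm_sub_sq_real (t - r) (o - r)
    rwa [sub_sub_sub_cancel_right, real_inner_comm, hang, hto, hor] at h
  -- Completing the square in the law of cosines bounds `Rt` below by the distance
  -- `Rr * sin (θ / 2)` from `o` to the line of the ray.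
  have hsq : Rt ^ 2 = (‖t - r‖ - Rr * Real.cos (θ / 2)) ^ 2 + (Rr * Real.sin (θ / 2)) ^ 2 := by
    linear_combination hcos - Rr ^ 2 * Real.sin_sq_add_cos_sq (θ / 2)
  nlinarith [sq_nonneg (‖t - r‖ - Rr * Real.cos (θ / 2))]
end

section
/- Let ρ be a real number with 0 < ρ ≤ 1. Then the function α ↦ ρ·cos²α + sin α·√(1 − ρ²·cos²α) is monotone nondecreasing on the interval [0, π/2]. -/
open Real

/-!
Put `s = sin α` and `u = √(1 - ρ² cos² α) = √((1 - ρ²) + ρ² s²)`. Then the function equals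
`ρ + s (u - ρ s)`, and since `(u - ρ s) (u + ρ s) = 1 - ρ²`, it is
`ρ + (1 - ρ²) s / (u + ρ s)` whenever `s > 0`. As `sin` is increasing on `[0, π/2]`, it suffices
that `s / (u + ρ s)` is nondecreasing in `s`; after cross-multiplication this says
`s₁ u₂ ≤ s₂ u₁` for `s₁ ≤ s₂`, which after squaring is `(1 - ρ²) s₁² ≤ (1 - ρ²) s₂²`.
-/

/-- Monotonicity in the variable `s = sin α`, with the square roots `u`, `v` at `s`, `t`
described by their defining equations. -/
lemma mul_sub_le_mul_sub_of_sq_eq {ρ s t u v : ℝ} (hρ0 : 0 < ρ) (hρ1 : ρ ≤ 1)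
    (hs : 0 ≤ s) (hst : s ≤ t) (hu : 0 ≤ u) (hv : 0 ≤ v)
    (hu2 : u ^ 2 = 1 - ρ ^ 2 + ρ ^ 2 * s ^ 2) (hv2 : v ^ 2 = 1 - ρ ^ 2 + ρ ^ 2 * t ^ 2) :
    s * (u - ρ * s) ≤ t * (v - ρ * t) := by
  have ht : 0 ≤ t := hs.trans hst
  have hk : 0 ≤ 1 - ρ ^ 2 := by nlinarith
  -- `s = 0` is separate because `u + ρ s` vanishes there when `ρ = 1`.
  rcases hs.eq_or_lt with rfl | hs0
  · have hvt : ρ * t ≤ v := abs_le_of_sq_le_sq' (by nlinarith) hv |>.2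
    simpa using mul_nonneg ht (sub_nonneg.2 hvt)
  · have ht0 : 0 < t := hs0.trans_le hst
    have hst2 : s ^ 2 ≤ t ^ 2 := by gcongr
    have hcross : s * v ≤ t * u := by
      refine (abs_le_of_sq_le_sq' ?_ (mul_nonneg ht hu)).2
      rw [mul_pow, mul_pow, hu2, hv2]
      nlinarith [mul_le_mul_of_nonneg_left hst2 hk]
    have hw1 : 0 < u + ρ * s := by positivity
    have hw2 : 0 < v + ρ * t := by positivity
    have e1 : u - ρ * s = (1 - ρ ^ 2) / (u + ρ * s) := by
      rw [eq_div_iff hw1.ne']; linear_combination hu2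
    have e2 : v - ρ * t = (1 - ρ ^ 2) / (v + ρ * t) := by
      rw [eq_div_iff hw2.ne']; linear_combination hv2
    rw [e1, e2, ← mul_div_assoc, ← mul_div_assoc, div_le_div_iff₀ hw1 hw2]
    nlinarith [mul_le_mul_of_nonneg_left hcross hk]

/-- The paper's downlink quantity `δ_{i,d}` is nondecreasing in the elevation
angle `α` on `[0, π/2]` (Section III-B). -/
theorem downlink_delta_monotone_in_alpha (ρ : ℝ) (hρ0 : 0 < ρ) (hρ1 : ρ ≤ 1) :
    MonotoneOn
      (fun α : ℝ => ρ * Real.cos α ^ 2 +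
        Real.sin α * Real.sqrt (1 - ρ ^ 2 * Real.cos α ^ 2))
      (Set.Icc 0 (π / 2)) := by
  intro a ha b hb hab
  have hrad (x : ℝ) : √(1 - ρ ^ 2 * cos x ^ 2) ^ 2 = 1 - ρ ^ 2 + ρ ^ 2 * sin x ^ 2 := by
    have hk : 0 ≤ 1 - ρ ^ 2 := by nlinarith
    have e : 1 - ρ ^ 2 * cos x ^ 2 = 1 - ρ ^ 2 + ρ ^ 2 * sin x ^ 2 := by
      rw [cos_sq']; ring
    rw [e, sq_sqrt (by positivity)]
  have hsin : sin a ≤ sin b :=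
    sin_le_sin_of_le_of_le_pi_div_two (by linarith [ha.1, pi_pos]) hb.2 hab
  have hsin0 : 0 ≤ sin a :=
    sin_nonneg_of_nonneg_of_le_pi ha.1 (by linarith [ha.2, pi_pos])
  have key := mul_sub_le_mul_sub_of_sq_eq hρ0 hρ1 hsin0 hsin (sqrt_nonneg _) (sqrt_nonneg _)
    (hrad a) (hrad b)
  have hca : ρ * cos a ^ 2 = ρ - ρ * sin a ^ 2 := by rw [cos_sq']; ring
  have hcb : ρ * cos b ^ 2 = ρ - ρ * sin b ^ 2 := by rw [cos_sq']; ring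
  dsimp only
  linarith
end

section
/- Let ρ be a real number with ρ ≥ 1. Then the function s ↦ ρ·s² + √(1 − s²)·√(1 − ρ²·s²) is monotone nonincreasing on the interval [0, 1/ρ]. -/
open Real

/-!
Put `u = s ^ 2 ≤ v = t ^ 2` and `P w = √(1 - w) * √(1 - ρ ^ 2 * w)`. The claim is
`P v + ρ * (v - u) ≤ P u`. After squaring, a factor `v - u ≥ 0` splits off and what is left is
`2 * ρ * P v ≤ ρ ^ 2 * (1 - v) + (1 - ρ ^ 2 * v)`, i.e. AM-GM for `ρ * √(1 - v)` and
`√(1 - ρ ^ 2 * v)`.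
-/

/-- The paper's uplink quantity `δ_{i,u}` is nonincreasing in `s = sin(θ/2)` on
`[0, 1/ρ]` (Section III-B). -/
theorem uplink_delta_antitone_in_s (ρ : ℝ) (hρ : 1 ≤ ρ) :
    AntitoneOn
      (fun s : ℝ => ρ * s ^ 2 + Real.sqrt (1 - s ^ 2) * Real.sqrt (1 - ρ ^ 2 * s ^ 2))
      (Set.Icc 0 (1 / ρ)) := by
  rintro s ⟨hs0, -⟩ t ⟨ht0, ht⟩ hst
  have hρ0 : 0 < ρ := by linarith
  have hρt : t * ρ ≤ 1 := (le_div_iff₀ hρ0).mp ht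
  have huv : s ^ 2 ≤ t ^ 2 := by gcongr
  have hv : ρ ^ 2 * t ^ 2 ≤ 1 := by
    have : (t * ρ) ^ 2 ≤ 1 := pow_le_one₀ (by positivity) hρt
    linarith [mul_pow t ρ 2]
  have hρ2 : 1 ≤ ρ ^ 2 := one_le_pow₀ hρ
  have hv1 : t ^ 2 ≤ 1 := by nlinarith [sq_nonneg t]
  have hu1 : s ^ 2 ≤ 1 := huv.trans hv1
  show ρ * t ^ 2 + √(1 - t ^ 2) * √(1 - ρ ^ 2 * t ^ 2)
    ≤ ρ * s ^ 2 + √(1 - s ^ 2) * √(1 - ρ ^ 2 * s ^ 2)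
  suffices h : √(1 - t ^ 2) * √(1 - ρ ^ 2 * t ^ 2) + ρ * (t ^ 2 - s ^ 2)
      ≤ √(1 - s ^ 2) * √(1 - ρ ^ 2 * s ^ 2) by linarith
  rw [← Real.sqrt_mul (sub_nonneg.mpr hu1)]
  apply Real.le_sqrt_of_sq_le
  have ha := Real.sq_sqrt (sub_nonneg.mpr hv1)
  have hb := Real.sq_sqrt (sub_nonneg.mpr hv)
  generalize √(1 - t ^ 2) = a at *
  generalize √(1 - ρ ^ 2 * t ^ 2) = b at *
  have hab : (a * b) ^ 2 = (1 - t ^ 2) * (1 - ρ ^ 2 * t ^ 2) := by rw [mul_pow, ha, hb]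
  have key : 2 * ρ * (a * b) ≤ ρ ^ 2 * (1 - t ^ 2) + (1 - ρ ^ 2 * t ^ 2) := by
    rw [← ha, ← hb]
    linarith [sq_nonneg (ρ * a - b)]
  have := mul_le_mul_of_nonneg_left key (sub_nonneg.mpr huv)
  linarith
end

section
/- Let s be a real number with 0 < s ≤ 1. Then the function ρ ↦ ρ·s² + √(1 − s²)·√(1 − ρ²·s²) is monotone nonincreasing on the interval [1, 1/s]. -/
/-!
The expression equals `cos (arcsin (ρ s) - arcsin s)` by the subtraction formula. On `[1, 1/s]`
the angle is nondecreasing in `ρ` and stays in `[0, π]`, where `cos` is decreasing.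
-/

open Real

/-- The vertex angle of the coverage dome is `arcsin (ρ s) - arcsin s`. -/
lemma delta_eq_cos_sub (s ρ : ℝ) (hs0 : 0 < s) (hs1 : s ≤ 1) (hρ : ρ ∈ Set.Icc 1 (1 / s)) :
    ρ * s ^ 2 + Real.sqrt (1 - s ^ 2) * Real.sqrt (1 - ρ ^ 2 * s ^ 2)
      = Real.cos (Real.arcsin (ρ * s) - Real.arcsin s) := by
  have h1 : ρ * s ≤ 1 := (le_div_iff₀ hs0).1 hρ.2
  have h0 : 0 ≤ ρ * s := mul_nonneg (zero_le_one.trans hρ.1) hs0.le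
  rw [Real.cos_sub, Real.cos_arcsin, Real.cos_arcsin, Real.sin_arcsin (by linarith) h1,
    Real.sin_arcsin (by linarith) hs1, mul_pow]
  ring

/-- The paper's uplink quantity `δ_{i,u}` is nonincreasing in `ρ = R_r / R_t` on
`[1, 1/s]` (Section III-B). -/
theorem uplink_delta_antitone_in_rho (s : ℝ) (hs0 : 0 < s) (hs1 : s ≤ 1) :
    AntitoneOn
      (fun ρ : ℝ => ρ * s ^ 2 + Real.sqrt (1 - s ^ 2) * Real.sqrt (1 - ρ ^ 2 * s ^ 2))
      (Set.Icc 1 (1 / s)) := by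
  intro a ha b hb hab
  simp only [delta_eq_cos_sub s a hs0 hs1 ha, delta_eq_cos_sub s b hs0 hs1 hb]
  have hsa : Real.arcsin s ≤ Real.arcsin (a * s) :=
    Real.monotone_arcsin (le_mul_of_one_le_left hs0.le ha.1)
  have hmono : Real.arcsin (a * s) ≤ Real.arcsin (b * s) :=
    Real.monotone_arcsin (mul_le_mul_of_nonneg_right hab hs0.le)
  have hb2 := Real.arcsin_le_pi_div_two (b * s)
  have hs2 := Real.neg_pi_div_two_le_arcsin s
  exact Real.cos_le_cos_of_nonneg_of_le_pi (by linarith) (by linarith) (by linarith)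
end
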